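/- arXiv:1805.02571 — 2 statements merged into one kernel-verified Lean document; each statement's English description precedes it below -/
import Mathlib

section
/- Let (X, d) be a pseudometric space in which all distances are at most π. Let p : ℕ₊ → X be a sequence, and let N : ℕ₊ → ℝ be a sequence of positive real numbers converging to a limit L > 0. Assume that for all positive integers m and j one has N_m ≤ N_{jm} and cos( d(p_m, p_{jm}) ) ≥ N_m / N_{jm}. Then (p_m) is a Cauchy sequence for d, i.e. for every ε > 0 there exists M such that d(p_m, p_{m'}) < ε for all m, m' ≥ M. -/
open Filter

/-- In a pseudometric space where all distances are at most `π`, a sequence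
`p : ℕ₊ → X` is Cauchy provided there are positive norms `N m` converging to a
positive limit `L` with `N m ≤ N (j*m)` and `cos (dist (p m) (p (j*m))) ≥ N m / N (j*m)`. -/
theorem cauchy_of_cos_dist_ge {X : Type*} [PseudoMetricSpace X]
    (hbd : ∀ x y : X, dist x y ≤ Real.pi)
    (p : ℕ+ → X) (N : ℕ+ → ℝ) (L : ℝ) (hL : 0 < L)
    (hNpos : ∀ m, 0 < N m)
    (hNlim : Tendsto N atTop (nhds L))
    (hmono : ∀ m j : ℕ+, N m ≤ N (j * m))
    (hcos : ∀ m j : ℕ+, N m / N (j * m) ≤ Real.cos (dist (p m) (p (j * m)))) :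
    ∀ ε > 0, ∃ M : ℕ+, ∀ m m' : ℕ+, M ≤ m → M ≤ m' → dist (p m) (p m') < ε := by
  intro ε hε
  have hπ := Real.pi_pos
  obtain ⟨δ, hδ0, hδε, hδπ⟩ : ∃ δ : ℝ, 0 < δ ∧ δ ≤ ε / 2 ∧ δ ≤ Real.pi :=
    ⟨min (ε / 2) Real.pi, lt_min (by linarith) hπ, min_le_left _ _, min_le_right _ _⟩
  have hc : Real.cos δ < 1 := by
    have := Real.cos_lt_cos_of_nonneg_of_le_pi le_rfl hδπ hδ0
    simpa using this
  have hlim : Tendsto (fun x : ℕ+ × ℕ+ => N x.1 / N x.2) atTop (nhds 1) := by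
    rw [← prod_atTop_atTop_eq]
    have := (hNlim.comp tendsto_fst).div (hNlim.comp tendsto_snd) hL.ne'
    rw [div_self hL.ne'] at this
    exact this
  obtain ⟨⟨a, b⟩, hab⟩ := eventually_atTop.1 (hlim.eventually (lt_mem_nhds hc))
  have key : ∀ m j : ℕ+, a ≤ m → b ≤ j * m → dist (p m) (p (j * m)) < δ := by
    intro m j hm hj
    by_contra! h
    have h1 := hab (m, j * m) ⟨hm, hj⟩
    have h2 := hcos m j
    have h3 := Real.cos_le_cos_of_nonneg_of_le_pi hδ0.le (hbd _ _) h
    simp only at h1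
    linarith
  have hle : ∀ m j : ℕ+, m ≤ j * m := fun m j => by
    rw [← PNat.coe_le_coe, PNat.mul_coe]
    exact Nat.le_mul_of_pos_left _ j.pos
  refine ⟨max a b, fun m m' hm hm' => ?_⟩
  have h1 := key m m' ((le_max_left _ _).trans hm)
    (((le_max_right _ _).trans hm).trans (hle _ _))
  have h2 := key m' m ((le_max_left _ _).trans hm')
    (((le_max_right _ _).trans hm').trans (hle _ _))
  rw [mul_comm m m'] at h2
  have := dist_triangle_right (p m) (p m') (p (m' * m))
  linarith
end

section
/- Let X be a topological space, let d and K be positive natural numbers, and let f : ℕ → X → ℝ be a family of functions such that f_k is continuous for every k. Assume that for every point x ∈ X there exists a real polynomial P_x of degree at most d such that f_k(x) = P_x(1/k) for every positive integer k divisible by K. Then the function x ↦ P_x(0), which equals the limit of f_k(x) as k → ∞ along multiples of K, is continuous on X. -/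
open Polynomial

/-- If each `f k` is continuous and, for every `x`, there is a polynomial `P x`
of degree at most `d` with `f k x = (P x).eval (1/k)` for every positive `k`
divisible by `K`, then the pointwise limit `x ↦ (P x).eval 0` is continuous. -/
theorem continuous_of_eventually_polynomial {X : Type*} [TopologicalSpace X]
    (d K : ℕ) (hd : 0 < d) (hK : 0 < K)
    (f : ℕ → X → ℝ) (hf : ∀ k, Continuous (f k))
    (P : X → Polynomial ℝ)
    (hdeg : ∀ x, (P x).degree ≤ (d : ℕ))
    (heq : ∀ x, ∀ k : ℕ, 0 < k → K ∣ k → f k x = (P x).eval (1 / (k : ℝ))) :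
    Continuous (fun x => (P x).eval 0) := by
  have hK' : (K : ℝ) ≠ 0 := by exact_mod_cast hK.ne'
  let v : ℕ → ℝ := fun i => 1 / ((K * (i + 1) : ℕ) : ℝ)
  have hv : Set.InjOn v (Finset.range (d + 1) : Finset ℕ) := by
    intro i _ j _ hij
    have h1 : ((K * (i + 1) : ℕ) : ℝ) = ((K * (j + 1) : ℕ) : ℝ) := by
      simpa only [v, one_div, inv_inj] using hij
    have h2 : K * (i + 1) = K * (j + 1) := by exact_mod_cast h1
    have h3 := Nat.eq_of_mul_eq_mul_left hK h2
    omega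
  have key : (fun x => (P x).eval 0) = fun x => ∑ i ∈ Finset.range (d + 1),
      f (K * (i + 1)) x * (Lagrange.basis (Finset.range (d + 1)) v i).eval 0 := by
    funext x
    have hlt : (P x).degree < (Finset.range (d + 1)).card := by
      rw [Finset.card_range]
      exact lt_of_le_of_lt (hdeg x) (by exact_mod_cast Nat.lt_succ_self d)
    have h := congrArg (Polynomial.eval 0) (Lagrange.eq_interpolate hv hlt)
    rw [h, Lagrange.interpolate_apply, Polynomial.eval_finset_sum]
    refine Finset.sum_congr rfl fun i _ => ?_
    rw [Polynomial.eval_mul, Polynomial.eval_C,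
      heq x (K * (i + 1)) (Nat.mul_pos hK (Nat.succ_pos i)) (Dvd.intro _ rfl)]
  rw [key]
  exact continuous_finset_sum _ fun i _ => (hf _).mul continuous_const
end
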